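/- Let n ≥ 1, let f : ℝⁿ → ℝ be differentiable, and let xᴸ, xᵁ ∈ ℝⁿ be bounds with xᵁᵢ − xᴸᵢ = δ for every coordinate i, where δ > 0. Let α ≥ 0 and λ_min ∈ ℝ satisfy α ≤ |λ_min|/2, and define L(x) = f(x) + α Σᵢ (xᴸᵢ − xᵢ)(xᵁᵢ − xᵢ), whose gradient is ∇L(x) = ∇f(x) + α(2x − xᴸ − xᵁ). Suppose ∇f is Lipschitz continuous with constant L_g on the box [xᴸ, xᵁ], i.e. ‖∇f(x) − ∇f(y)‖₂ ≤ L_g‖x − y‖₂ for all x, y in the box. Then for any x_t, x_k in the box with ‖x_t − x_k‖₂ ≤ (√n/2)·δ, one has ‖∇L(x_t) − ∇f(x_k)‖₂ ≤ (L_g/2)·√n·δ + (|λ_min|/2)·√n·δ. -/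

import Mathlib

/-!
The perturbation is `α ⟪xL - x, xU - x⟫`, whose gradient is `α (2x - xL - xU)`. By polarization
`‖2x - xL - xU‖² = ‖xU - xL‖² + 4 ⟪xL - x, xU - x⟫`, so the sign condition that makes `L`
an underestimator on the box, `⟪xL - x, xU - x⟫ ≤ 0`, also says that `‖2x - xL - xU‖` is at most
the diameter of the box. The bound is then the triangle inequality
`‖∇L(xt) - ∇f(xk)‖ ≤ ‖∇f(xt) - ∇f(xk)‖ + |α| ‖2xt - xL - xU‖`.
-/

open scoped InnerProductSpace

section Polarization

variable {E : Type*} [NormedAddCommGroup E] [InnerProductSpace ℝ E]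

lemma hasGradientAt_inner_sub_sub [CompleteSpace E] (a b x : E) :
    HasGradientAt (fun y => ⟪a - y, b - y⟫_ℝ) (2 • x - a - b) x := by
  have ha : HasFDerivAt (fun y => a - y) (-ContinuousLinearMap.id ℝ E) x :=
    (hasFDerivAt_id x).const_sub a
  have hb : HasFDerivAt (fun y => b - y) (-ContinuousLinearMap.id ℝ E) x :=
    (hasFDerivAt_id x).const_sub b
  rw [hasGradientAt_iff_hasFDerivAt]
  refine (ha.inner ℝ hb).congr_fderiv (ContinuousLinearMap.ext fun v => ?_)
  calc ⟪a - x, -v⟫_ℝ + ⟪-v, b - x⟫_ℝ = ⟪x - a, v⟫_ℝ + ⟪x - b, v⟫_ℝ := by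
        rw [real_inner_comm (b - x), inner_neg_right, inner_neg_right, ← inner_neg_left,
          ← inner_neg_left, neg_sub, neg_sub]
    _ = ⟪2 • x - a - b, v⟫_ℝ := by
        rw [← inner_add_left]
        congr 1
        module

lemma norm_two_smul_sub_sub_sq (a b x : E) :
    ‖2 • x - a - b‖ ^ 2 = ‖b - a‖ ^ 2 + 4 * ⟪a - x, b - x⟫_ℝ := by
  calc ‖2 • x - a - b‖ ^ 2 = ‖(a - x) + (b - x)‖ ^ 2 := by
        rw [← norm_neg]
        congr 2
        module
    _ = ‖(a - x) - (b - x)‖ ^ 2 + 4 * ⟪a - x, b - x⟫_ℝ := by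
        rw [norm_add_sq_real, norm_sub_sq_real (a - x)]
        ring
    _ = ‖b - a‖ ^ 2 + 4 * ⟪a - x, b - x⟫_ℝ := by
        rw [sub_sub_sub_cancel_right, norm_sub_rev]

lemma norm_two_smul_sub_sub_le_norm_sub_iff {a b x : E} :
    ‖2 • x - a - b‖ ≤ ‖b - a‖ ↔ ⟪a - x, b - x⟫_ℝ ≤ 0 := by
  rw [← sq_le_sq₀ (norm_nonneg _) (norm_nonneg _), norm_two_smul_sub_sub_sq]
  constructor <;> intro h <;> linarith

end Polarization

lemma norm_map_sub_le_mul_norm_sub {E F : Type*} [SeminormedAddCommGroup E]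
    [SeminormedAddCommGroup F] {g : E → F} {K r : ℝ} {a b x y : E}
    (hab : ‖g b - g a‖ ≤ K * ‖b - a‖) (hxy : ‖g x - g y‖ ≤ K * ‖x - y‖)
    (hr : ‖x - y‖ ≤ r * ‖b - a‖) : ‖g x - g y‖ ≤ K * (r * ‖b - a‖) := by
  -- The sign of `K` is unknown: either `a` and `b` force `0 ≤ K`, or `‖x - y‖ = 0`.
  refine hxy.trans ?_
  rcases (norm_nonneg (b - a)).eq_or_lt with hzero | hpos
  · have hxy_zero : ‖x - y‖ = 0 := le_antisymm (by simpa [← hzero] using hr) (norm_nonneg _)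
    simp [hxy_zero, ← hzero]
  · have hK : 0 ≤ K := nonneg_of_mul_nonneg_left ((norm_nonneg _).trans hab) hpos
    exact mul_le_mul_of_nonneg_left hr hK

section Box

variable {ι : Type*} [Fintype ι]

lemma norm_eq_sqrt_card_mul_abs_of_forall_eq {v : EuclideanSpace ℝ ι} {c : ℝ}
    (hv : ∀ i, v i = c) : ‖v‖ = √(Fintype.card ι) * |c| := by
  simp [EuclideanSpace.norm_eq, hv, Real.sqrt_sq_eq_abs]

lemma inner_sub_sub_nonpos_of_mem_box {xL xU x : EuclideanSpace ℝ ι}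
    (hx : ∀ i, xL i ≤ x i ∧ x i ≤ xU i) : ⟪xL - x, xU - x⟫_ℝ ≤ 0 := by
  rw [PiLp.inner_apply]
  exact Finset.sum_nonpos fun i _ =>
    mul_nonpos_of_nonneg_of_nonpos (sub_nonneg.2 (hx i).2) (sub_nonpos.2 (hx i).1)

/-- The αBB underestimator of `f` with uniform parameter `α` on the box `[xL, xU]`, as a function
on the whole space. -/
def abbUnderestimator (f : EuclideanSpace ℝ ι → ℝ) (α : ℝ) (xL xU x : EuclideanSpace ℝ ι) : ℝ :=
  f x + α * ∑ i, (xL i - x i) * (xU i - x i)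

lemma abbUnderestimator_eq_add_mul_inner (f : EuclideanSpace ℝ ι → ℝ) (α : ℝ)
    (xL xU x : EuclideanSpace ℝ ι) :
    abbUnderestimator f α xL xU x = f x + α * ⟪xL - x, xU - x⟫_ℝ := by
  simp [abbUnderestimator, PiLp.inner_apply, mul_comm]

lemma hasGradientAt_abbUnderestimator {f : EuclideanSpace ℝ ι → ℝ} {f' x : EuclideanSpace ℝ ι}
    (hf : HasGradientAt f f' x) (α : ℝ) (xL xU : EuclideanSpace ℝ ι) :
    HasGradientAt (abbUnderestimator f α xL xU) (f' + α • (2 • x - xL - xU)) x := by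
  rw [funext (abbUnderestimator_eq_add_mul_inner f α xL xU), hasGradientAt_iff_hasFDerivAt,
    map_add, map_smul]
  exact hf.hasFDerivAt.add ((hasGradientAt_inner_sub_sub xL xU x).hasFDerivAt.const_mul α)

theorem abb_gradient_bound_general {f : EuclideanSpace ℝ ι → ℝ} {xL xU : EuclideanSpace ℝ ι}
    {α Lg : ℝ}
    (hLip : ∀ x y : EuclideanSpace ℝ ι,
      (∀ i, xL i ≤ x i ∧ x i ≤ xU i) → (∀ i, xL i ≤ y i ∧ y i ≤ xU i) →
      ‖gradient f x - gradient f y‖ ≤ Lg * ‖x - y‖)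
    {xt xk : EuclideanSpace ℝ ι} (hf : DifferentiableAt ℝ f xt)
    (hxt : ∀ i, xL i ≤ xt i ∧ xt i ≤ xU i) (hxk : ∀ i, xL i ≤ xk i ∧ xk i ≤ xU i)
    (hdist : ‖xt - xk‖ ≤ ‖xU - xL‖ / 2) :
    gradient (abbUnderestimator f α xL xU) xt = gradient f xt + α • (2 • xt - xL - xU) ∧
    ‖gradient (abbUnderestimator f α xL xU) xt - gradient f xk‖
      ≤ Lg / 2 * ‖xU - xL‖ + |α| * ‖xU - xL‖ := by
  have hgrad := (hasGradientAt_abbUnderestimator hf.hasGradientAt α xL xU).gradient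
  refine ⟨hgrad, ?_⟩
  have hle : ∀ i, xL i ≤ xU i := fun i => (hxt i).1.trans (hxt i).2
  have hgrad_sub : ‖gradient f xt - gradient f xk‖ ≤ Lg * (1 / 2 * ‖xU - xL‖) :=
    norm_map_sub_le_mul_norm_sub
      (hLip xU xL (fun i => ⟨hle i, le_rfl⟩) (fun i => ⟨le_rfl, hle i⟩))
      (hLip xt xk hxt hxk) (by linarith)
  have hquad : ‖2 • xt - xL - xU‖ ≤ ‖xU - xL‖ :=
    norm_two_smul_sub_sub_le_norm_sub_iff.2 (inner_sub_sub_nonpos_of_mem_box hxt)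
  calc ‖gradient (abbUnderestimator f α xL xU) xt - gradient f xk‖
      = ‖(gradient f xt - gradient f xk) + α • (2 • xt - xL - xU)‖ := by
        rw [hgrad, add_sub_right_comm]
    _ ≤ ‖gradient f xt - gradient f xk‖ + |α| * ‖2 • xt - xL - xU‖ :=
        (norm_add_le _ _).trans_eq (by rw [norm_smul, Real.norm_eq_abs])
    _ ≤ Lg * (1 / 2 * ‖xU - xL‖) + |α| * ‖xU - xL‖ := by gcongr
    _ = Lg / 2 * ‖xU - xL‖ + |α| * ‖xU - xL‖ := by ring

end Box

/-- **Gradient bound for the αBB underestimator (Theorem 1, part 2).**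
If every side of the box `[xL, xU]` has width `δ > 0`, `0 ≤ α ≤ |λmin|/2`,
`f` is differentiable with `∇f` being `Lg`-Lipschitz on the box, and
`xt, xk` lie in the box with `‖xt - xk‖ ≤ (√n/2)·δ`, then the gradient of the
αBB underestimator `L(x) = f(x) + α ∑ i (xLᵢ - xᵢ)(xUᵢ - xᵢ)`
(namely `∇L(x) = ∇f(x) + α(2x - xL - xU)`) satisfies
`‖∇L(xt) - ∇f(xk)‖ ≤ (Lg/2)√n δ + (|λmin|/2)√n δ`. -/
theorem abb_gradient_bound (n : ℕ) (hn : 1 ≤ n)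
    (f : EuclideanSpace ℝ (Fin n) → ℝ) (hf : Differentiable ℝ f)
    (xL xU : EuclideanSpace ℝ (Fin n)) (δ : ℝ) (hδ : 0 < δ)
    (hwidth : ∀ i, xU i - xL i = δ)
    (α lammin : ℝ) (hα0 : 0 ≤ α) (hαle : α ≤ |lammin| / 2)
    (Lg : ℝ)
    (hLip : ∀ x y : EuclideanSpace ℝ (Fin n),
      (∀ i, xL i ≤ x i ∧ x i ≤ xU i) → (∀ i, xL i ≤ y i ∧ y i ≤ xU i) →
      ‖gradient f x - gradient f y‖ ≤ Lg * ‖x - y‖)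
    (L : EuclideanSpace ℝ (Fin n) → ℝ)
    (hL : L = fun x => f x + α * ∑ i, (xL i - x i) * (xU i - x i))
    (xt xk : EuclideanSpace ℝ (Fin n))
    (hxt : ∀ i, xL i ≤ xt i ∧ xt i ≤ xU i)
    (hxk : ∀ i, xL i ≤ xk i ∧ xk i ≤ xU i)
    (hdist : ‖xt - xk‖ ≤ (Real.sqrt n / 2) * δ) :
    gradient L xt = gradient f xt + α • (2 • xt - xL - xU) ∧
    ‖gradient L xt - gradient f xk‖
      ≤ Lg / 2 * Real.sqrt n * δ + |lammin| / 2 * Real.sqrt n * δ := by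
  subst hL
  have hdiam : ‖xU - xL‖ = √n * δ := by
    simpa [abs_of_pos hδ] using norm_eq_sqrt_card_mul_abs_of_forall_eq (v := xU - xL) hwidth
  have hα : |α| ≤ |lammin| / 2 := (abs_of_nonneg hα0).trans_le hαle
  rw [mul_assoc, mul_assoc, ← hdiam]
  exact (abb_gradient_bound_general hLip (hf xt) hxt hxk (by linarith)).imp_right
    fun hbound => hbound.trans (by gcongr)
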